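/- For every non-negative integer k, every non-negative integer n, and every j ∈ {2, 4, 5, 6}, the number of (49k+2)-colour partitions of 49n+7j+3 is divisible by 7; that is, p_{49k+2}(49n+7j+3) ≡ 0 (mod 7). -/

import Mathlib

/-- `colouredPartitions r n` is the number of `r`-colour partitions of `n`:
multisets of pairs `(m, c)` with `m` a positive integer part and `c` one of `r`
colours, whose parts (first components, with multiplicity) sum to `n`.  Such a
multiset is encoded by its multiplicity function `f : ℕ+ × Fin r →₀ ℕ`. -/
noncomputable def colouredPartitions (r n : ℕ) : ℕ :=
  Nat.card {f : ℕ+ × Fin r →₀ ℕ // (f.sum fun x m => (x.1 : ℕ) * m) = n}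

/-!
Let `φ = ∏ (1 - q ^ m)` and `θ = q d/dq`, and work with power series over `𝔽₇`. There the exponent
`1 / 24` of Dedekind's `η` is `5`, so `η = q ^ 5 φ`, and `P`, `Q`, `R` denote Ramanujan's series.

Jacobi's series for `φ ^ 3` gives `θ³ η³ = η³`, hence `R = 1`. The pentagonal number theorem gives
`θ³ η = -η - q ^ 7 φ ^ 49`, hence `P = Q ^ 2` and `(1 - Q ^ 3) ^ 2 = q ^ 2 φ ^ 48`. For
`H = q ^ 4 φ ^ (-2)` Ramanujan's differential equations then yield
`θ⁶ H = H - 3 (1 - Q ^ 3) ^ 3 H = H ± 3 (q φ ^ 10) ^ 7`. Since `θ` is linear over seventh powers,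
the terms of `φ ^ (-49 k) H` with exponent divisible by `7` form a multiple of
`(φ ^ (-7 k) q φ ^ 10) ^ 7`. Up to a constant factor, `p_{49 k + 2}(7 m + 3)` is therefore the
coefficient of `q ^ m` in `(φ ^ (1 - k)) ^ 7 φ ^ 3`, and `θ³ η³ = η³` rules out the residues
`2`, `4`, `5`, `6` of `m`.
-/

open Finset PowerSeries

section Counting

lemma card_sum_eq_sum_finsuppAntidiag_prod_card {ι α : Type*} [Fintype ι] [DecidableEq ι]
    (size : α → ℕ) [∀ n, Finite {a // size a = n}] (n : ℕ) :
    Nat.card {F : ι → α // ∑ c, size (F c) = n} =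
      ∑ l ∈ (univ : Finset ι).finsuppAntidiag n, ∏ c, Nat.card {a // size a = l c} := by
  let sizes (F : ι → α) : ι →₀ ℕ := Finsupp.equivFunOnFinite.symm fun c => size (F c)
  have hsizes (F : ι → α) :
      ∑ c, size (F c) = n ↔ sizes F ∈ (univ : Finset ι).finsuppAntidiag n := by
    simp [sizes, mem_finsuppAntidiag]
  let fibre (l : ι →₀ ℕ) : {F // sizes F = l} ≃ ((c : ι) → {a // size a = l c}) :=
    (Equiv.subtypeEquivRight fun F => by simp [sizes, Finsupp.ext_iff]).trans
      Equiv.subtypePiEquivPi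
  have (l : ι →₀ ℕ) : Finite {F // sizes F = l} := .of_equiv _ (fibre l).symm
  rw [← Nat.card_congr (Equiv.sigmaSubtypeFiberEquivSubtype sizes hsizes), Nat.card_sigma,
    sum_coe_sort _ fun l => Nat.card {F // sizes F = l}]
  exact sum_congr rfl fun l _ => (Nat.card_congr (fibre l)).trans Nat.card_pi

lemma mk_card_sum_eq_pow (R : Type*) [CommSemiring R] {ι α : Type*} [Fintype ι]
    (size : α → ℕ) [∀ n, Finite {a // size a = n}] :
    mk (fun n => (Nat.card {F : ι → α // ∑ c, size (F c) = n} : R)) =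
      mk (fun n => (Nat.card {a // size a = n} : R)) ^ Fintype.card ι := by
  classical
  ext n
  rw [coeff_mk, card_sum_eq_sum_finsuppAntidiag_prod_card, ← card_univ, ← prod_const, coeff_prod]
  simp only [coeff_mk, Nat.cast_sum, Nat.cast_prod]

/-- The size of the partition in which the part `m` occurs `f m` times. -/
noncomputable def partitionSize (f : ℕ+ →₀ ℕ) : ℕ :=
  f.sum fun m k => (m : ℕ) * k

lemma sum_map_toMultiset_eq_partitionSize (f : ℕ+ →₀ ℕ) :
    ((Finsupp.toMultiset f).map ((↑) : ℕ+ → ℕ)).sum = partitionSize f := by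
  rw [Finsupp.toMultiset_map, Finsupp.sum_toMultiset,
    Finsupp.sum_mapDomain_index (by simp) (by simp [add_mul])]
  simp only [partitionSize, smul_eq_mul, mul_comm]

/-- The partition of `n` with prescribed multiplicities. -/
noncomputable def partitionOfMultiplicities {n : ℕ} (f : {f : ℕ+ →₀ ℕ // partitionSize f = n}) :
    n.Partition where
  parts := (Finsupp.toMultiset f.1).map (↑)
  parts_pos hi := by
    obtain ⟨m, -, rfl⟩ := Multiset.mem_map.mp hi
    exact m.pos
  parts_sum := (sum_map_toMultiset_eq_partitionSize f.1).trans f.2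

lemma bijective_partitionOfMultiplicities (n : ℕ) :
    Function.Bijective (partitionOfMultiplicities (n := n)) := by
  refine ⟨fun f g h => ?_, fun p => ?_⟩
  · have hparts := Multiset.map_injective PNat.coe_injective (congrArg Nat.Partition.parts h)
    exact Subtype.ext (Multiset.toFinsupp.symm.injective hparts)
  · obtain ⟨M, hM⟩ : ∃ M : Multiset ℕ+, M.map (↑) = p.parts :=
      CanLift.prf p.parts fun _ => p.parts_pos
    refine ⟨⟨Multiset.toFinsupp M, ?_⟩, Nat.Partition.ext ?_⟩
    · rw [← sum_map_toMultiset_eq_partitionSize, Multiset.toFinsupp_toMultiset, hM, p.parts_sum]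
    · simpa only [partitionOfMultiplicities, Multiset.toFinsupp_toMultiset] using hM

instance finite_partitionSize_eq (n : ℕ) : Finite {f : ℕ+ →₀ ℕ // partitionSize f = n} :=
  .of_injective _ (bijective_partitionOfMultiplicities n).injective

lemma card_partitionSize_eq (n : ℕ) :
    Nat.card {f : ℕ+ →₀ ℕ // partitionSize f = n} = Fintype.card n.Partition :=
  (Nat.card_eq_of_bijective _ (bijective_partitionOfMultiplicities n)).trans
    Nat.card_eq_fintype_card

lemma card_sum_partitionSize_eq_colouredPartitions (r n : ℕ) :
    Nat.card {F : Fin r → ℕ+ →₀ ℕ // ∑ c, partitionSize (F c) = n} = colouredPartitions r n := by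
  let e : (ℕ+ × Fin r →₀ ℕ) ≃ (Fin r → ℕ+ →₀ ℕ) :=
    (Finsupp.domCongr (Equiv.prodComm _ _)).toEquiv.trans <|
      Finsupp.curryEquiv.trans Finsupp.equivFunOnFinite
  have he (f : ℕ+ × Fin r →₀ ℕ) :
      ∑ c, partitionSize (e f c) = f.sum fun x m => (x.1 : ℕ) * m := by
    have hcurry :=
      Finsupp.sum_curry_index (f.equivMapDomain (Equiv.prodComm _ _)) fun _ m k => (m : ℕ) * k
    rwa [Finsupp.sum_equivMapDomain, Finsupp.sum_fintype _ _ (by simp)] at hcurry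
  exact (Nat.card_congr (e.subtypeEquiv fun f => by rw [he])).symm

variable (R : Type*) [CommRing R]

open PowerSeries.WithPiTopology in
lemma mk_card_partition_mul_pentagonalSeries :
    mk (fun n => (Fintype.card n.Partition : R)) * pentagonalSeries R = 1 := by
  let : TopologicalSpace R := ⊥
  have : DiscreteTopology R := ⟨rfl⟩
  have hprod := (Nat.Partition.hasProd_powerSeriesMk_card_restricted R fun _ => True).mul
    (hasProd_one_sub_X_pow R)
  have hfactor (i : ℕ) : (∑' j : ℕ, (X : R⟦X⟧) ^ ((i + 1) * j)) * (1 - X ^ (i + 1)) = 1 := by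
    simp only [pow_mul]
    exact tsum_pow_mul_one_sub_of_constantCoeff_eq_zero (by simp)
  simp only [if_true, hfactor] at hprod
  simpa [Nat.Partition.restricted] using hprod.unique hasProd_one

lemma mk_colouredPartitions_mul_pentagonalSeries_pow (r : ℕ) :
    mk (fun n => (colouredPartitions r n : R)) * pentagonalSeries R ^ r = 1 := by
  have hpow := mk_card_sum_eq_pow R (ι := Fin r) partitionSize
  simp only [card_sum_partitionSize_eq_colouredPartitions, card_partitionSize_eq,
    Fintype.card_fin] at hpow
  rw [hpow, ← mul_pow, mk_card_partition_mul_pentagonalSeries, one_pow]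

end Counting

/-- The `q`-Pochhammer symbol `(q; q)ₙ = (1 - q) (1 - q²) ⋯ (1 - qⁿ)`. -/
def qPochhammer {S : Type*} [CommRing S] (q : S) (n : ℕ) : S :=
  ∏ i ∈ range n, (1 - q ^ (i + 1))

/-- The coefficient of `z ^ (n + 1 + j)` in the finite triple product
`(z - 1) ∏_{i = 1}^{n} (1 - z q ^ i) (z - q ^ i)`. The recursion multiplies by the next two factors;
only half of the coefficients occur, because their sequence is antisymmetric. -/
def tripleProductCoeff {S : Type*} [CommRing S] (q : S) : ℕ → ℕ → S
  | 0, 0 => 1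
  | 0, _ + 1 => 0
  | n + 1, 0 => (1 + q ^ (2 * n + 2) + q ^ (n + 1)) * tripleProductCoeff q n 0 -
      q ^ (n + 1) * tripleProductCoeff q n 1
  | n + 1, j + 1 => (1 + q ^ (2 * n + 2)) * tripleProductCoeff q n (j + 1) -
      q ^ (n + 1) * (tripleProductCoeff q n j + tripleProductCoeff q n (j + 2))

section Finite

variable {S : Type*} [CommRing S] (q : S)

lemma qPochhammer_succ (n : ℕ) :
    qPochhammer q (n + 1) = qPochhammer q n * (1 - q ^ (n + 1)) :=
  prod_range_succ _ n

lemma tripleProductCoeff_eq_zero_of_lt :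
    ∀ {n j : ℕ}, n < j → tripleProductCoeff q n j = 0
  | 0, j + 1, _ => rfl
  | n + 1, j + 1, h => by
    rw [tripleProductCoeff, tripleProductCoeff_eq_zero_of_lt (by omega : n < j + 1),
      tripleProductCoeff_eq_zero_of_lt (by omega : n < j),
      tripleProductCoeff_eq_zero_of_lt (by omega : n < j + 2)]
    ring

lemma sum_odd_mul_neighbours (b : ℕ → S) (N : ℕ) :
    b 1 - b 0 + ∑ j ∈ range N, (2 * j + 3 : S) * (b j + b (j + 2)) =
      2 * ∑ j ∈ range N, (2 * j + 1 : S) * b j + (2 * N - 1) * b N + (2 * N + 1) * b (N + 1) := by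
  induction N with
  | zero => simp; ring
  | succ N ih =>
    rw [sum_range_succ, sum_range_succ, ← add_assoc, ih]
    push_cast
    ring

lemma sum_odd_mul_tripleProductCoeff (n : ℕ) :
    ∑ j ∈ range (n + 1), (2 * j + 1 : S) * tripleProductCoeff q n j = qPochhammer q n ^ 2 := by
  induction n with
  | zero => simp [tripleProductCoeff, qPochhammer]
  | succ n ih =>
    set a := tripleProductCoeff q n
    have ha : ∀ j, n < j → a j = 0 := fun j => tripleProductCoeff_eq_zero_of_lt q
    have hparts := sum_odd_mul_neighbours a (n + 1)
    rw [ha (n + 1) (by omega), ha (n + 1 + 1) (by omega), ih] at hparts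
    have hshift := sum_range_succ' (fun j : ℕ => (2 * j + 1 : S) * a j) (n + 1)
    rw [sum_range_succ, ih, ha (n + 1) (by omega)] at hshift
    have hstep (j : ℕ) : (2 * (j + 1 : ℕ) + 1 : S) * tripleProductCoeff q (n + 1) (j + 1) =
        (1 + q ^ (2 * n + 2)) * ((2 * (j + 1 : ℕ) + 1) * a (j + 1)) -
          q ^ (n + 1) * ((2 * j + 3) * (a j + a (j + 2))) := by
      rw [tripleProductCoeff]
      push_cast
      ring
    rw [sum_range_succ', sum_congr rfl fun j _ => hstep j, sum_sub_distrib, ← mul_sum, ← mul_sum,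
      qPochhammer_succ, tripleProductCoeff]
    simp only [Nat.cast_zero] at hshift ⊢
    linear_combination -(1 + q ^ (2 * n + 2)) * hshift - q ^ (n + 1) * hparts

/-- The signed power `(-1) ^ j * q ^ (j (j + 1) / 2)` of the `j`-th term of Jacobi's series
`∑ (2j + 1) (-1) ^ j q ^ (j (j + 1) / 2)`. -/
def jacobiTerm {S : Type*} [CommRing S] (q : S) (j : ℕ) : S :=
  (-1) ^ j * q ^ (j + 1).choose 2

lemma jacobiTerm_succ (j : ℕ) : jacobiTerm q (j + 1) = -q ^ (j + 1) * jacobiTerm q j := by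
  rw [jacobiTerm, jacobiTerm, Nat.choose_succ_succ' (j + 1) 1, Nat.choose_one_right, pow_add]
  ring

/-- The formula `(-1) ^ j q ^ (j (j + 1) / 2) [2n + 1 choose n - j]_q` for the `n`-th row of
`tripleProductCoeff`, with the denominators of the Gaussian binomial cleared and `m` standing for
`n - j`. -/
def RowIsGaussian {S : Type*} [CommRing S] (q : S) (n : ℕ) : Prop :=
  ∀ m j, m + j = n →
    tripleProductCoeff q n j * (qPochhammer q m * qPochhammer q (n + j + 1)) =
      jacobiTerm q j * qPochhammer q (2 * n + 1)

namespace RowIsGaussian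

variable {q} {n m j : ℕ}

lemma mul_right_neighbour (hn : RowIsGaussian q n) (hmj : m + j = n) :
    tripleProductCoeff q n (j + 1) * (qPochhammer q m * qPochhammer q (n + j + 2)) =
      (1 - q ^ m) * (jacobiTerm q (j + 1) * qPochhammer q (2 * n + 1)) := by
  cases m with
  | zero => simp [tripleProductCoeff_eq_zero_of_lt q (by omega : n < j + 1)]
  | succ m =>
    rw [← hn m (j + 1) (by omega), qPochhammer_succ]
    ring_nf

lemma mul_second_right_neighbour (hn : RowIsGaussian q n) (hmj : m + j = n) :
    q * (tripleProductCoeff q n (j + 2) * (qPochhammer q m * qPochhammer q (n + j + 3))) =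
      (1 - q ^ m) * (q - q ^ m) * (jacobiTerm q (j + 2) * qPochhammer q (2 * n + 1)) := by
  cases m with
  | zero => simp [tripleProductCoeff_eq_zero_of_lt q (by omega : n < j + 2)]
  | succ m =>
    have h := hn.mul_right_neighbour (by omega : m + (j + 1) = n)
    rw [show n + (j + 1) + 2 = n + j + 3 by ring] at h
    rw [qPochhammer_succ]
    linear_combination q * (1 - q ^ (m + 1)) * h

lemma succ (hn : RowIsGaussian q n) : RowIsGaussian q (n + 1) := by
  rintro m (_ | j) hmj
  · obtain rfl : m = n + 1 := hmj
    have h₀ := hn n 0 rfl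
    have h₁ := hn.mul_right_neighbour (add_zero n)
    simp only [jacobiTerm_succ, tripleProductCoeff, add_zero, zero_add, mul_add, mul_one,
      qPochhammer_succ] at h₀ h₁ ⊢
    linear_combination (1 + q ^ (2 * n + 2) + q ^ (n + 1)) * (1 - q ^ (n + 1)) *
      (1 - q ^ (n + 2)) * h₀ - q ^ (n + 1) * (1 - q ^ (n + 1)) * h₁
  · obtain rfl : n = m + j := by omega
    have h₀ := hn m j rfl
    have h₁ := hn.mul_right_neighbour rfl
    have h₂ := hn.mul_second_right_neighbour rfl
    simp only [jacobiTerm_succ, tripleProductCoeff, qPochhammer_succ, mul_add, mul_one,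
      show m + j + 1 + (j + 1) + 1 = m + j + j + 1 + 1 + 1 by ring] at h₀ h₁ h₂ ⊢
    linear_combination (1 + q ^ (2 * (m + j) + 2)) * (1 - q ^ (m + j + j + 3)) * h₁ -
      q ^ (m + j + 1) * (1 - q ^ (m + j + j + 2)) * (1 - q ^ (m + j + j + 3)) * h₀ -
      q ^ (m + j) * h₂

end RowIsGaussian

lemma rowIsGaussian (n : ℕ) : RowIsGaussian q n := by
  induction n with
  | zero =>
    intro m j hmj
    obtain ⟨rfl, rfl⟩ : m = 0 ∧ j = 0 := by omega
    simp [tripleProductCoeff, jacobiTerm, qPochhammer]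
  | succ n ih => exact ih.succ

end Finite

section Jacobi

variable (R : Type*) [CommRing R]

local notation "φ" => pentagonalSeries R

lemma X_pow_succ_dvd_prod_one_sub_X_pow_sub_one {n : ℕ} {s : Finset ℕ} (hs : ∀ i ∈ s, n ≤ i) :
    (X : R⟦X⟧) ^ (n + 1) ∣ ∏ i ∈ s, (1 - X ^ (i + 1)) - 1 := by
  have hfactor (i : ℕ) (hi : i ∈ s) :
      Ideal.Quotient.mk (Ideal.span {(X : R⟦X⟧) ^ (n + 1)}) (1 - X ^ (i + 1)) = 1 := by
    rw [map_sub, map_one, sub_eq_self, Ideal.Quotient.eq_zero_iff_mem, Ideal.mem_span_singleton]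
    exact pow_dvd_pow X (Nat.succ_le_succ (hs i hi))
  rw [← Ideal.mem_span_singleton, ← Ideal.Quotient.eq_zero_iff_mem, map_sub, map_one, map_prod,
    prod_congr rfl hfactor, prod_const_one, sub_self]

lemma X_pow_succ_dvd_pentagonalSeries_sub_qPochhammer (n : ℕ) :
    (X : R⟦X⟧) ^ (n + 1) ∣ φ - qPochhammer X n := by
  rw [X_pow_dvd_iff]
  intro m hm
  obtain ⟨s, hs⟩ :=
    Filter.eventually_atTop.mp (coeff_prod_one_sub_X_pow_eventually_eq R m)
  have hdvd : (X : R⟦X⟧) ^ (n + 1) ∣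
      ∏ i ∈ s ∪ range n, (1 - (X : R⟦X⟧) ^ (i + 1)) - qPochhammer X n := by
    rw [← prod_sdiff (subset_union_right : range n ⊆ s ∪ range n), qPochhammer, ← sub_one_mul]
    exact (X_pow_succ_dvd_prod_one_sub_X_pow_sub_one R
      fun i hi => not_lt.mp fun h => (mem_sdiff.mp hi).2 (mem_range.mpr h)).mul_right _
  rw [map_sub, ← hs (s ∪ range n) subset_union_left, ← map_sub]
  exact X_pow_dvd_iff.mp hdvd m hm

lemma constantCoeff_pentagonalSeries : constantCoeff φ = 1 := by
  have h := coeff_pentagonalSeries_pentagonal R 0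
  rw [show pentagonal 0 = 0 from rfl] at h
  simpa using h

lemma isUnit_pentagonalSeries : IsUnit φ := by
  rw [isUnit_iff_constantCoeff, constantCoeff_pentagonalSeries]
  exact isUnit_one

lemma isUnit_qPochhammer_X (n : ℕ) : IsUnit (qPochhammer (X : R⟦X⟧) n) := by
  simp [isUnit_iff_constantCoeff, qPochhammer]

lemma X_pow_succ_dvd_pentagonalSeries_mul_tripleProductCoeff_sub {n j : ℕ} (hj : j ≤ n) :
    (X : R⟦X⟧) ^ (n + 1) ∣ φ * tripleProductCoeff X n j - jacobiTerm X j := by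
  obtain ⟨m, rfl⟩ := Nat.exists_eq_add_of_le' hj
  have hclosed := rowIsGaussian (X : R⟦X⟧) (m + j) m j rfl
  have hle : m + j + 1 ≤ (j + 1).choose 2 + (m + 1) := by
    rw [Nat.choose_succ_succ' j 1, Nat.choose_one_right]
    omega
  have hterm : (X : R⟦X⟧) ^ (j + 1).choose 2 ∣ jacobiTerm X j := dvd_mul_left _ _
  have hcoeff : (X : R⟦X⟧) ^ (j + 1).choose 2 ∣ tripleProductCoeff X (m + j) j := by
    rw [← (((isUnit_qPochhammer_X R m).mul (isUnit_qPochhammer_X R _)).dvd_mul_right), hclosed]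
    exact hterm.mul_right _
  have hlow (i : ℕ) (hi : m ≤ i) : (X : R⟦X⟧) ^ (m + 1) ∣ φ - qPochhammer X i :=
    (pow_dvd_pow X (by omega)).trans (X_pow_succ_dvd_pentagonalSeries_sub_qPochhammer R i)
  refine (pow_dvd_pow X hle).trans ?_
  rw [← (isUnit_pentagonalSeries R).dvd_mul_left, pow_add]
  have hsplit : φ * (φ * tripleProductCoeff X (m + j) j - jacobiTerm X j) =
      tripleProductCoeff X (m + j) j *
        ((φ - qPochhammer X m) * φ + (φ - qPochhammer X (m + j + j + 1)) * qPochhammer X m) -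
      jacobiTerm X j * (φ - qPochhammer X (2 * (m + j) + 1)) := by
    linear_combination hclosed
  rw [hsplit]
  exact dvd_sub
    (mul_dvd_mul hcoeff (((hlow m le_rfl).mul_right _).add ((hlow _ (by omega)).mul_right _)))
    (mul_dvd_mul hterm (hlow _ (by omega)))

lemma X_pow_succ_dvd_pentagonalSeries_pow_three_sub (n : ℕ) :
    (X : R⟦X⟧) ^ (n + 1) ∣ φ ^ 3 - ∑ j ∈ range (n + 1), (2 * j + 1 : R⟦X⟧) * jacobiTerm X j := by
  have hsplit : φ ^ 3 - ∑ j ∈ range (n + 1), (2 * j + 1 : R⟦X⟧) * jacobiTerm X j =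
      (φ - qPochhammer X n) * (φ * (φ + qPochhammer X n)) +
        ∑ j ∈ range (n + 1), (2 * j + 1 : R⟦X⟧) *
          (φ * tripleProductCoeff X n j - jacobiTerm X j) := by
    simp only [mul_sub, sum_sub_distrib, mul_left_comm _ φ, ← mul_sum,
      sum_odd_mul_tripleProductCoeff]
    ring
  rw [hsplit]
  refine ((X_pow_succ_dvd_pentagonalSeries_sub_qPochhammer R n).mul_right _).add
    (dvd_sum fun j hj => Dvd.dvd.mul_left ?_ _)
  exact X_pow_succ_dvd_pentagonalSeries_mul_tripleProductCoeff_sub R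
    (Nat.lt_succ_iff.mp (mem_range.mp hj))

theorem coeff_pentagonalSeries_pow_three (n : ℕ) :
    coeff n (φ ^ 3) =
      ∑ j ∈ range (n + 1) with (j + 1).choose 2 = n, (2 * j + 1 : R) * (-1) ^ j := by
  have hcoeff (j : ℕ) : coeff n ((2 * j + 1 : R⟦X⟧) * jacobiTerm X j) =
      if (j + 1).choose 2 = n then (2 * j + 1 : R) * (-1) ^ j else 0 := by
    have hC : (2 * j + 1 : R⟦X⟧) * jacobiTerm X j =
        C ((2 * j + 1 : R) * (-1) ^ j) * X ^ (j + 1).choose 2 := by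
      simp [jacobiTerm, mul_assoc, map_ofNat]
    rw [hC, coeff_C_mul, coeff_X_pow, mul_ite, mul_one, mul_zero]
    simp only [eq_comm]
  have h := X_pow_dvd_iff.mp (X_pow_succ_dvd_pentagonalSeries_pow_three_sub R n) n n.lt_succ_self
  rw [map_sub, sub_eq_zero, map_sum] at h
  rw [h, sum_filter]
  exact sum_congr rfl fun j _ => hcoeff j

end Jacobi

section Derivation

variable {A S : Type*} [CommRing A] [CommSemiring S] [Algebra S A] (D : Derivation S A A)

lemma derivation_ofNat (n : ℕ) [n.AtLeastTwo] : D (ofNat(n) : A) = 0 :=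
  D.map_natCast n

lemma iterate_derivation_mul_of_eq_zero {c : A} (hc : D c = 0) (f : A) (k : ℕ) :
    D^[k] (c * f) = c * D^[k] f := by
  induction k with
  | zero => rfl
  | succ k ih => simp [Function.iterate_succ_apply', ih, hc]

lemma derivation_pow_char_eq_zero (p : ℕ) [CharP A p] (f : A) : D (f ^ p) = 0 := by
  rw [Derivation.leibniz_pow, ← Nat.cast_smul_eq_nsmul A, CharP.cast_eq_zero, zero_smul]

end Derivation

/-- The derivation `θ = X d/dX` of formal power series. -/
noncomputable def theta (R : Type*) [CommSemiring R] : Derivation R R⟦X⟧ R⟦X⟧ :=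
  (X : R⟦X⟧) • PowerSeries.derivative R

section Theta

variable {R : Type*} [CommSemiring R]

lemma coeff_theta (f : R⟦X⟧) (n : ℕ) : coeff n (theta R f) = n * coeff n f := by
  rw [theta, Derivation.smul_apply, smul_eq_mul]
  cases n with
  | zero => simp
  | succ n => rw [coeff_succ_X_mul, PowerSeries.coeff_derivative, Nat.cast_succ, mul_comm]

lemma coeff_theta_iterate (f : R⟦X⟧) (k n : ℕ) :
    coeff n ((theta R)^[k] f) = (n : R) ^ k * coeff n f := by
  induction k with
  | zero => simp
  | succ k ih => rw [Function.iterate_succ_apply', coeff_theta, ih, pow_succ', mul_assoc]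

lemma theta_X_pow (n : ℕ) : theta R (X ^ n) = (n : R⟦X⟧) * X ^ n := by
  ext m
  rw [coeff_theta, ← map_natCast C, coeff_C_mul, coeff_X_pow]
  split_ifs with h <;> simp [h]

end Theta

section Frobenius

variable (p : ℕ)

instance charP_powerSeries (R : Type*) [CommSemiring R] [CharP R p] : CharP R⟦X⟧ p :=
  charP_of_injective_ringHom C_injective p

variable [Fact p.Prime]

lemma pow_prime_eq_expand (f : (ZMod p)⟦X⟧) : f ^ p = expand p (NeZero.ne p) f := by
  have h : MvPowerSeries.map (frobenius (ZMod p) p) (MvPowerSeries.expand p (NeZero.ne p) f) =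
      f ^ p :=
    MvPowerSeries.map_frobenius_expand p (NeZero.ne p)
  rw [← h, ZMod.frobenius_zmod, MvPowerSeries.map_id]
  rfl

lemma coeff_pow_prime_pow (k : ℕ) (f : (ZMod p)⟦X⟧) (n : ℕ) :
    coeff n (f ^ p ^ k) = if p ^ k ∣ n then coeff (n / p ^ k) f else 0 := by
  suffices f ^ p ^ k = expand (p ^ k) (NeZero.ne (p ^ k)) f by rw [this, coeff_expand]
  induction k with
  | zero => simp
  | succ k ih =>
    simp only [pow_succ, pow_mul, ih]
    rw [pow_prime_eq_expand, ← expand_mul]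
    simp only [mul_comm]

lemma coeff_mul_pow_prime (f : (ZMod p)⟦X⟧) (n : ℕ) : coeff (p * n) (f ^ p) = coeff n f := by
  rw [pow_prime_eq_expand, coeff_expand_mul]

end Frobenius

section Ramanujan

variable {A S : Type*} [CommRing A] [CharP A 7] [CommSemiring S] [Algebra S A]
  {D : Derivation S A A} {P Q R : A}

lemma iterate_three_of_logDeriv_eq {T : A} (hP : D P = 3 * (P ^ 2 - Q))
    (hQ : D Q = 5 * (P * Q - R)) (hT : D T = P * T) : D^[3] T = R * T := by
  have h₂ : D^[2] T = (4 * P ^ 2 - 3 * Q) * T := by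
    simp only [Function.iterate_succ_apply', Function.iterate_zero_apply, hT, hP, D.leibniz,
      smul_eq_mul]
    ring
  rw [Function.iterate_succ_apply', h₂]
  simp only [hT, hP, hQ, D.leibniz, D.leibniz_pow, derivation_ofNat, map_sub, smul_eq_mul,
    nsmul_eq_mul]
  grind

lemma iterate_three_of_logDeriv_eq_five_mul {η : A} (hP : D P = 3 * (P ^ 2 - Q))
    (hQ : D Q = 5 * (P * Q - R)) (hη : D η = 5 * P * η) :
    D^[3] η = -(P ^ 3 - 2 * P * Q + 2 * R) * η := by
  have h₂ : D^[2] η = (5 * P ^ 2 - Q) * η := by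
    simp only [Function.iterate_succ_apply', Function.iterate_zero_apply, hη, hP, D.leibniz,
      derivation_ofNat, smul_eq_mul]
    grind
  rw [Function.iterate_succ_apply', h₂]
  simp only [hη, hP, hQ, D.leibniz, D.leibniz_pow, derivation_ofNat, map_sub, smul_eq_mul,
    nsmul_eq_mul]
  grind

lemma iterate_four_of_logDeriv_eq_five_mul {η : A} (hP : D P = 3 * (P ^ 2 - Q))
    (hQ : D Q = 5 * (P * Q - 1)) (hη : D η = 5 * P * η) : D^[4] η = (Q ^ 2 + P) * η := by
  rw [Function.iterate_succ_apply', iterate_three_of_logDeriv_eq_five_mul hP hQ hη]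
  simp only [hη, hP, hQ, D.leibniz, D.leibniz_pow, derivation_ofNat, map_sub, map_add, map_neg,
    smul_eq_mul, nsmul_eq_mul, mul_one]
  grind

lemma iterate_six_of_logDeriv_eq_four_mul_sq {H : A} (hQ : D Q = 2 * (1 - Q ^ 3))
    (hH : D H = 4 * Q ^ 2 * H) : D^[6] H = H - 3 * (1 - Q ^ 3) ^ 3 * H := by
  have h₂ : D^[2] H = 2 * Q * H := by
    simp only [Function.iterate_succ_apply', Function.iterate_zero_apply, hH, hQ, D.leibniz,
      D.leibniz_pow, derivation_ofNat, smul_eq_mul, nsmul_eq_mul]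
    grind
  have h₃ : D^[3] H = 4 * (Q ^ 3 + 1) * H := by
    rw [Function.iterate_succ_apply', h₂]
    simp only [hH, hQ, D.leibniz, derivation_ofNat, smul_eq_mul]
    grind
  have h₄ : D^[4] H = (5 * Q ^ 2 - Q ^ 5) * H := by
    rw [Function.iterate_succ_apply', h₃]
    simp only [hH, hQ, D.leibniz, D.leibniz_pow, D.map_one_eq_zero, derivation_ofNat, map_add,
      smul_eq_mul, nsmul_eq_mul]
    grind
  have h₅ : D^[5] H = (4 * Q ^ 4 - Q - Q ^ 7) * H := by
    rw [Function.iterate_succ_apply', h₄]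
    simp only [hH, hQ, D.leibniz, D.leibniz_pow, derivation_ofNat, map_sub, smul_eq_mul,
      nsmul_eq_mul]
    grind
  rw [Function.iterate_succ_apply', h₅]
  simp only [hH, hQ, D.leibniz, D.leibniz_pow, derivation_ofNat, map_sub, smul_eq_mul,
    nsmul_eq_mul]
  grind

end Ramanujan

section ModSeven

instance fact_prime_seven : Fact (Nat.Prime 7) := ⟨by norm_num⟩

local notation "φ" => pentagonalSeries (ZMod 7)

local notation "θ" => theta (ZMod 7)

/-- The reduction modulo 7 of Dedekind's `η = q ^ (1 / 24) φ`, where `1 / 24` is replaced by its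
residue `5`. -/
noncomputable def etaSeries : (ZMod 7)⟦X⟧ := X ^ 5 * φ

/-- The reduction modulo 7 of Ramanujan's `P = 1 - 24 ∑ σ(n) q ^ n`, obtained from the logarithmic
derivative of Euler's product. -/
noncomputable def ramanujanP : (ZMod 7)⟦X⟧ := 1 + 3 * (θ φ * φ⁻¹)

/-- The reduction modulo 7 of Ramanujan's `Q = 1 + 240 ∑ σ₃(n) q ^ n`, defined by his equation
`12 θ P = P ^ 2 - Q`. -/
noncomputable def ramanujanQ : (ZMod 7)⟦X⟧ := ramanujanP ^ 2 + 2 * θ ramanujanP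

/-- The reduction modulo 7 of Ramanujan's `R = 1 - 504 ∑ σ₅(n) q ^ n`, defined by his equation
`3 θ Q = P Q - R`. -/
noncomputable def ramanujanR : (ZMod 7)⟦X⟧ := ramanujanP * ramanujanQ - 3 * θ ramanujanQ

lemma theta_ramanujanP : θ ramanujanP = 3 * (ramanujanP ^ 2 - ramanujanQ) := by
  rw [ramanujanQ]
  grind

lemma theta_ramanujanQ : θ ramanujanQ = 5 * (ramanujanP * ramanujanQ - ramanujanR) := by
  rw [ramanujanR]
  grind

lemma pentagonalSeries_mul_inv : φ * φ⁻¹ = 1 :=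
  PowerSeries.mul_inv_cancel _ (by simp [constantCoeff_pentagonalSeries])

lemma theta_pentagonalSeries : θ φ = 5 * (ramanujanP - 1) * φ := by
  rw [ramanujanP]
  grind [pentagonalSeries_mul_inv]

lemma theta_etaSeries : θ etaSeries = 5 * ramanujanP * etaSeries := by
  rw [etaSeries, Derivation.leibniz, theta_X_pow, theta_pentagonalSeries]
  simp only [smul_eq_mul]
  push_cast
  ring

lemma etaSeries_ne_zero : etaSeries ≠ 0 :=
  mul_ne_zero (pow_ne_zero 5 X_ne_zero) (isUnit_pentagonalSeries (ZMod 7)).ne_zero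

-- `8 (j + 1).choose 2 + 1 = (2 * j + 1) ^ 2`, so the exponents of `η ^ 3` are squares modulo 7.
lemma cube_mul_coeff_pentagonalSeries_pow_three (n : ℕ) :
    (n + 15 : ZMod 7) ^ 3 * coeff n (φ ^ 3) = coeff n (φ ^ 3) := by
  rw [coeff_pentagonalSeries_pow_three, mul_sum]
  refine sum_congr rfl fun j hj => ?_
  have hchoose : 8 * n + 1 = (2 * j + 1) ^ 2 := by
    have h := Nat.add_one_mul_choose_eq j 1
    rw [(mem_filter.mp hj).2, Nat.choose_one_right] at h
    nlinarith
  have hsquare : (n + 15 : ZMod 7) = (2 * j + 1) ^ 2 := by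
    have h := congrArg (Nat.cast : ℕ → ZMod 7) hchoose
    push_cast at h
    grind
  have hfermat := ZMod.pow_card (2 * j + 1 : ZMod 7)
  rw [hsquare]
  linear_combination (-1) ^ j * hfermat

lemma theta_iterate_three_etaSeries_pow_three : θ^[3] (etaSeries ^ 3) = etaSeries ^ 3 := by
  have heta : etaSeries ^ 3 = X ^ 15 * φ ^ 3 := by
    rw [etaSeries]
    ring
  ext n
  rw [coeff_theta_iterate, heta, coeff_X_pow_mul']
  split_ifs with hn
  · obtain ⟨m, rfl⟩ := Nat.exists_eq_add_of_le' hn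
    simpa using cube_mul_coeff_pentagonalSeries_pow_three m
  · rw [mul_zero]

lemma ramanujanR_eq_one : ramanujanR = 1 := by
  have hlog : θ (etaSeries ^ 3) = ramanujanP * etaSeries ^ 3 := by
    rw [Derivation.leibniz_pow, theta_etaSeries]
    simp only [smul_eq_mul, nsmul_eq_mul]
    grind
  have h := (iterate_three_of_logDeriv_eq theta_ramanujanP theta_ramanujanQ hlog).symm.trans
    theta_iterate_three_etaSeries_pow_three
  exact mul_right_cancel₀ (pow_ne_zero 3 etaSeries_ne_zero) (h.trans (one_mul _).symm)

lemma pentagonal_seven_mul_sub_one (l : ℤ) : pentagonal (7 * l - 1) = 49 * pentagonal l + 2 := by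
  have h := two_mul_natCast_pentagonal (7 * l - 1)
  have hl := two_mul_natCast_pentagonal l
  have : 2 * (pentagonal (7 * l - 1) : ℤ) = 2 * (49 * pentagonal l + 2) := by
    linear_combination h - 49 * hl
  omega

lemma negOnePow_seven_mul_sub_one (l : ℤ) : (7 * l - 1).negOnePow = -l.negOnePow := by
  rw [show 7 * l - 1 = l + 2 * (3 * l) - 1 by ring, Int.negOnePow_sub, Int.negOnePow_add,
    Int.negOnePow_two_mul, Int.negOnePow_one, mul_one, mul_neg_one]

lemma coeff_X_sq_mul_pentagonalSeries_pow_pentagonal (l : ℤ) :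
    coeff (pentagonal (7 * l - 1)) (X ^ 2 * φ ^ 49) = -coeff (pentagonal (7 * l - 1)) φ := by
  rw [coeff_pentagonalSeries_pentagonal, negOnePow_seven_mul_sub_one, pentagonal_seven_mul_sub_one,
    coeff_X_pow_mul, show 49 = 7 ^ 2 by rfl, coeff_pow_prime_pow]
  simp [coeff_pentagonalSeries_pentagonal]

lemma coeff_X_sq_mul_pentagonalSeries_pow_eq_zero {n : ℕ}
    (hn : ∀ l : ℤ, n ≠ pentagonal (7 * l - 1)) : coeff n (X ^ 2 * φ ^ 49) = 0 := by
  rw [coeff_X_pow_mul', show 49 = 7 ^ 2 by rfl, coeff_pow_prime_pow]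
  split_ifs with htwo hdvd
  · refine coeff_pentagonalSeries_eq_zero _ ?_
    rintro ⟨l, hl⟩
    refine hn l ?_
    rw [pentagonal_seven_mul_sub_one]
    omega
  all_goals rfl

lemma pentagonal_add_five_pow_three {k : ℤ} (hk : ∀ l, k ≠ 7 * l - 1) :
    (pentagonal k + 5 : ZMod 7) ^ 3 = -1 := by
  have hsquare : 3 * (pentagonal k + 5 : ZMod 7) = (6 * k - 1) ^ 2 := by
    have h := congrArg (Int.cast : ℤ → ZMod 7) (two_mul_natCast_pentagonal k)
    push_cast at h
    grind
  have hne : (6 * k - 1 : ZMod 7) ≠ 0 := by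
    intro h
    obtain ⟨l, hl⟩ := (ZMod.intCast_zmod_eq_zero_iff_dvd (6 * k - 1) 7).mp (by exact_mod_cast h)
    exact hk (k - l) (by push_cast at hl; linarith)
  have hfermat := ZMod.pow_card_sub_one_eq_one hne
  grind

-- `24 * pentagonal k + 1 = (6 * k - 1) ^ 2`, so the exponents of `η` prime to 7 lie in a single
-- coset of the squares modulo 7.
lemma cube_add_one_mul_coeff_pentagonalSeries (n : ℕ) :
    ((n + 5 : ZMod 7) ^ 3 + 1) * coeff n φ = -coeff n (X ^ 2 * φ ^ 49) := by
  by_cases hn : ∃ l : ℤ, n = pentagonal (7 * l - 1)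
  · obtain ⟨l, rfl⟩ := hn
    have hzero : (pentagonal (7 * l - 1) + 5 : ZMod 7) = 0 := by
      rw [pentagonal_seven_mul_sub_one]
      push_cast
      grind
    rw [coeff_X_sq_mul_pentagonalSeries_pow_pentagonal, hzero]
    ring
  · push Not at hn
    rw [coeff_X_sq_mul_pentagonalSeries_pow_eq_zero hn, neg_zero]
    by_cases hpent : n ∈ Set.range pentagonal
    · obtain ⟨k, rfl⟩ := hpent
      rw [pentagonal_add_five_pow_three fun l hl => hn l (hl ▸ rfl), neg_add_cancel, zero_mul]
    · rw [coeff_pentagonalSeries_eq_zero _ hpent, mul_zero]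

lemma theta_iterate_three_etaSeries : θ^[3] etaSeries = -etaSeries - (X * φ ^ 7) ^ 7 := by
  have hsplit : (X * φ ^ 7) ^ 7 = X ^ 5 * (X ^ 2 * φ ^ 49) := by ring
  ext n
  rw [hsplit, coeff_theta_iterate, map_sub, map_neg, etaSeries, coeff_X_pow_mul', coeff_X_pow_mul']
  split_ifs with hn
  · obtain ⟨m, rfl⟩ := Nat.exists_eq_add_of_le' hn
    have h := cube_add_one_mul_coeff_pentagonalSeries m
    rw [Nat.add_sub_cancel]
    push_cast
    linear_combination h
  · simp

lemma ramanujanP_eq_sq : ramanujanP = ramanujanQ ^ 2 := by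
  have hQ := theta_ramanujanQ
  rw [ramanujanR_eq_one] at hQ
  have hfour : θ^[4] etaSeries = -(5 * ramanujanP * etaSeries) := by
    rw [Function.iterate_succ_apply', theta_iterate_three_etaSeries, map_sub, map_neg,
      derivation_pow_char_eq_zero, sub_zero, theta_etaSeries]
  rw [iterate_four_of_logDeriv_eq_five_mul theta_ramanujanP hQ theta_etaSeries] at hfour
  refine mul_right_cancel₀ etaSeries_ne_zero ?_
  grind

lemma theta_ramanujanQ_eq : θ ramanujanQ = 2 * (1 - ramanujanQ ^ 3) := by
  rw [theta_ramanujanQ, ramanujanR_eq_one, ramanujanP_eq_sq]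
  grind

lemma one_sub_ramanujanQ_pow_three_sq : (1 - ramanujanQ ^ 3) ^ 2 = (X * φ ^ 24) ^ 2 := by
  have hthree := (iterate_three_of_logDeriv_eq_five_mul theta_ramanujanP theta_ramanujanQ
    theta_etaSeries).symm.trans theta_iterate_three_etaSeries
  rw [ramanujanR_eq_one, ramanujanP_eq_sq] at hthree
  have hsplit : (X * φ ^ 7) ^ 7 = (X * φ ^ 24) ^ 2 * etaSeries := by
    rw [etaSeries]
    ring
  refine mul_right_cancel₀ etaSeries_ne_zero ?_
  linear_combination hsplit - hthree

/-- The series `q ^ 4 / φ ^ 2`: the generating function of 2-colour partitions, shifted so that its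
logarithmic `θ`-derivative is a multiple of `ramanujanP`. -/
noncomputable def shiftedTwoColourSeries : (ZMod 7)⟦X⟧ := X ^ 4 * φ⁻¹ ^ 2

lemma theta_shiftedTwoColourSeries :
    θ shiftedTwoColourSeries = 4 * ramanujanP * shiftedTwoColourSeries := by
  have hinv : θ φ⁻¹ = 2 * (ramanujanP - 1) * φ⁻¹ := by
    have h := congrArg θ pentagonalSeries_mul_inv
    rw [Derivation.leibniz, theta_pentagonalSeries, Derivation.map_one_eq_zero, smul_eq_mul,
      smul_eq_mul] at h
    refine mul_left_cancel₀ (isUnit_pentagonalSeries (ZMod 7)).ne_zero ?_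
    grind
  rw [shiftedTwoColourSeries, Derivation.leibniz, Derivation.leibniz_pow, theta_X_pow, hinv]
  simp only [smul_eq_mul, nsmul_eq_mul]
  push_cast
  ring

lemma exists_theta_iterate_six_shiftedTwoColourSeries :
    ∃ a : ZMod 7, θ^[6] shiftedTwoColourSeries =
      shiftedTwoColourSeries - C a * (X * φ ^ 10) ^ 7 := by
  have hsix := theta_shiftedTwoColourSeries
  rw [ramanujanP_eq_sq] at hsix
  rw [iterate_six_of_logDeriv_eq_four_mul_sq theta_ramanujanQ_eq hsix]
  have hcube : (X * φ ^ 24) ^ 3 * shiftedTwoColourSeries = (X * φ ^ 10) ^ 7 := by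
    rw [shiftedTwoColourSeries]
    linear_combination X ^ 7 * φ ^ 70 * (φ * φ⁻¹ + 1) * pentagonalSeries_mul_inv
  rcases sq_eq_sq_iff_eq_or_eq_neg.mp one_sub_ramanujanQ_pow_three_sq with h | h
  · refine ⟨3, ?_⟩
    rw [h, ← hcube, map_ofNat]
    ring
  · refine ⟨-3, ?_⟩
    rw [h, ← hcube, map_neg, map_ofNat]
    ring

lemma exists_coeff_seven_mul_pow_mul_shiftedTwoColourSeries :
    ∃ a : ZMod 7, ∀ (c : (ZMod 7)⟦X⟧) (n : ℕ),
      coeff (7 * n) (c ^ 7 * shiftedTwoColourSeries) = a * coeff n (c * (X * φ ^ 10)) := by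
  obtain ⟨a, ha⟩ := exists_theta_iterate_six_shiftedTwoColourSeries
  refine ⟨a, fun c n => ?_⟩
  have hzero : coeff (7 * n) (θ^[6] (c ^ 7 * shiftedTwoColourSeries)) = 0 := by
    rw [coeff_theta_iterate, CharP.cast_eq_zero_iff (ZMod 7) 7 (7 * n) |>.mpr (dvd_mul_right 7 n),
      zero_pow (by norm_num), zero_mul]
  rw [iterate_derivation_mul_of_eq_zero _ (derivation_pow_char_eq_zero _ 7 c), ha, mul_sub,
    mul_left_comm, ← mul_pow, map_sub, coeff_C_mul, coeff_mul_pow_prime] at hzero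
  exact sub_eq_zero.mp hzero

lemma coeff_pow_seven_mul_pentagonalSeries_pow_three_eq_zero (c : (ZMod 7)⟦X⟧) {m : ℕ}
    (hm : (m + 15 : ZMod 7) ^ 3 ≠ 1) : coeff m (c ^ 7 * φ ^ 3) = 0 := by
  have hfix : θ^[3] (c ^ 7 * etaSeries ^ 3) = c ^ 7 * etaSeries ^ 3 := by
    rw [iterate_derivation_mul_of_eq_zero _ (derivation_pow_char_eq_zero _ 7 c),
      theta_iterate_three_etaSeries_pow_three]
  have hsplit : c ^ 7 * etaSeries ^ 3 = X ^ 15 * (c ^ 7 * φ ^ 3) := by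
    rw [etaSeries]
    ring
  have h := congrArg (coeff (m + 15)) hfix
  rw [coeff_theta_iterate, hsplit, coeff_X_pow_mul] at h
  push_cast at h
  exact (mul_left_eq_self₀.mp h).resolve_left hm

lemma mk_colouredPartitions_eq_inv_pow (r : ℕ) :
    mk (fun n => (colouredPartitions r n : ZMod 7)) = φ⁻¹ ^ r := by
  have h := mk_colouredPartitions_mul_pentagonalSeries_pow (ZMod 7) r
  refine mul_right_cancel₀ (pow_ne_zero r (isUnit_pentagonalSeries (ZMod 7)).ne_zero) ?_
  rw [h, ← mul_pow, mul_comm, pentagonalSeries_mul_inv, one_pow]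

lemma exists_colouredPartitions_eq_mul_coeff (k : ℕ) :
    ∃ a : ZMod 7, ∀ m : ℕ, (colouredPartitions (49 * k + 2) (7 * m + 3) : ZMod 7) =
      a * coeff m ((φ⁻¹ ^ k * φ) ^ 7 * φ ^ 3) := by
  obtain ⟨a, ha⟩ := exists_coeff_seven_mul_pow_mul_shiftedTwoColourSeries
  refine ⟨a, fun m => ?_⟩
  have hshift : X ^ 4 * φ⁻¹ ^ (49 * k + 2) = (φ⁻¹ ^ (7 * k)) ^ 7 * shiftedTwoColourSeries := by
    rw [shiftedTwoColourSeries]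
    ring
  have hsplit : φ⁻¹ ^ (7 * k) * (X * φ ^ 10) = X * ((φ⁻¹ ^ k * φ) ^ 7 * φ ^ 3) := by ring
  calc (colouredPartitions (49 * k + 2) (7 * m + 3) : ZMod 7)
      = coeff (7 * m + 3) (φ⁻¹ ^ (49 * k + 2)) := by
        rw [← mk_colouredPartitions_eq_inv_pow, coeff_mk]
    _ = coeff (7 * (m + 1)) ((φ⁻¹ ^ (7 * k)) ^ 7 * shiftedTwoColourSeries) := by
        rw [← hshift, show 7 * (m + 1) = 7 * m + 3 + 4 by ring, coeff_X_pow_mul]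
    _ = a * coeff m ((φ⁻¹ ^ k * φ) ^ 7 * φ ^ 3) := by
        rw [ha, hsplit, coeff_succ_X_mul]

end ModSeven

theorem colouredPartitions_cong_mod7_49k2 (k n j : ℕ) (hj : j = 2 ∨ j = 4 ∨ j = 5 ∨ j = 6) :
    7 ∣ colouredPartitions (49 * k + 2) (49 * n + 7 * j + 3) := by
  have hcube : ((7 * n + j : ℕ) + 15 : ZMod 7) ^ 3 ≠ 1 := by
    have hseven : (7 : ZMod 7) = 0 := rfl
    push_cast
    rw [hseven, zero_mul, zero_add]
    rcases hj with rfl | rfl | rfl | rfl <;> decide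
  obtain ⟨a, ha⟩ := exists_colouredPartitions_eq_mul_coeff k
  rw [← ZMod.natCast_eq_zero_iff, show 49 * n + 7 * j + 3 = 7 * (7 * n + j) + 3 by ring, ha,
    coeff_pow_seven_mul_pentagonalSeries_pow_three_eq_zero _ hcube, mul_zero]
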